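/- For a permutation $\pi$ of $[n]=\{1,\dots,n\}$ written in one-line notation, an index $i\in[n-1]$ is a descent of $\pi$ if $\pi(i)>\pi(i+1)$, and an index $i\in\{2,\dots,n-1\}$ is a peak of $\pi$ if $\pi(i-1)<\pi(i)>\pi(i+1)$. A cyclic permutation of length $n$ is a permutation of $[n]$ whose cycle decomposition consists of a single $n$-cycle. Let $n\ge 1$ with $n\not\equiv 2\pmod 4$. Then for all integers $j,k\ge 0$, the number of cyclic permutations of length $n$ with exactly $j$ peaks and exactly $k$ descents equals the number of cyclic permutations of length $n$ with exactly $j$ peaks and exactly $n-1-k$ descents. -/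

import Mathlib

/-- The number of descents of a permutation of `Fin n`: the number of positions `i` which have a
successor position `i + 1` and at which `π (i + 1) < π i`. -/
def des (n : ℕ) (π : Equiv.Perm (Fin n)) : ℕ :=
  (Finset.univ.filter fun i : Fin n =>
    ∃ h : i.val + 1 < n, π ⟨i.val + 1, h⟩ < π i).card

/-- The number of peaks of a permutation of `Fin n`: the number of positions `i` which have both a
predecessor position `i - 1` and a successor position `i + 1` and at which
`π (i - 1) < π i` and `π (i + 1) < π i`. -/
def pk (n : ℕ) (π : Equiv.Perm (Fin n)) : ℕ :=
  (Finset.univ.filter fun i : Fin n =>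
    ∃ (_ : 1 ≤ i.val) (h : i.val + 1 < n),
      π ⟨i.val - 1, by omega⟩ < π i ∧ π ⟨i.val + 1, h⟩ < π i).card

/-- `π` is a single cycle through all of `Fin n`. For `n = 1` this includes the identity, whose
cycle decomposition is one cycle of length one. -/
def IsCyclicPerm (n : ℕ) (π : Equiv.Perm (Fin n)) : Prop :=
  π.IsCycleOn Set.univ

/-!
A permutation `π` is increasing on each block of positions cut out by a set `S` exactly when its
descents lie in `S`, and decreasing on each block exactly when its ascents do. Write a full cycle as
`π = σ * c * σ⁻¹` with `c` a fixed full cycle, and let `b` send a position to its block. The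
itinerary `k ↦ b (π ^ k x)`, read lexicographically (with alternating signs in the decreasing case),
is monotone in the starting position `x`, so `σ` can be recovered by sorting the itineraries of the
word `b ∘ σ` along `c`, as in the Gessel–Reutenauer bijection. In both cases the words that occur
are the rearrangements of `b` that are aperiodic along `c`. The decreasing case is where `n mod 4`
matters: only even powers of `π` preserve the order, so preserving `b` under `π ^ t` forces at first
only `π ^ (2 * t) = 1`, and a nontrivial such `π ^ t` with `t` odd exists only for `n ≡ 2 mod 4`.
By inclusion–exclusion over `S`, descent sets and ascent sets of full cycles are equidistributed.
Peaks and descents are read off the descent set, and conjugation by the order reversal turns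
statistics of the ascent set into those of a permutation with the same peaks and complementary
number of descents.
-/

section SignedMono

variable {α β γ : Type*}

/-- The strict order for the sign `ε = 1`, the reversed strict order for `ε = -1`. It lets
increasing and decreasing maps be treated simultaneously. -/
def SignedLT [LT α] (ε : ℤˣ) (x y : α) : Prop :=
  if ε = 1 then x < y else y < x

@[simp]
theorem signedLT_one [LT α] {x y : α} : SignedLT 1 x y ↔ x < y := by
  simp [SignedLT]

@[simp]
theorem signedLT_neg_one [LT α] {x y : α} : SignedLT (-1) x y ↔ y < x := by
  simp [SignedLT]

theorem signedLT_neg [LT α] {ε : ℤˣ} {x y : α} : SignedLT (-ε) x y ↔ SignedLT ε y x := by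
  rcases Int.units_eq_one_or ε with rfl | rfl <;> simp

theorem signedLT_congr [LT α] [LT β] {ε : ℤˣ} {x y : α} {x' y' : β} (h : x < y ↔ x' < y')
    (h' : y < x ↔ y' < x') : SignedLT ε x y ↔ SignedLT ε x' y' := by
  rcases Int.units_eq_one_or ε with rfl | rfl <;> simpa

theorem SignedLT.smul_le_smul [PartialOrder α] {b : α → ℤ} (hb : Monotone b) {ε : ℤˣ} {x y : α}
    (h : SignedLT ε x y) : ε • b x ≤ ε • b y := by
  rcases Int.units_eq_one_or ε with rfl | rfl
  · simpa using hb (signedLT_one.1 h).le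
  · simpa [Units.smul_def] using hb (signedLT_neg_one.1 h).le

/-- A map that is strictly increasing (for `ε = 1`) or strictly decreasing (for `ε = -1`) on each
fibre of the labelling `b`. -/
def IsSignedMono [LT α] [LT β] (ε : ℤˣ) (b : α → γ) (f : α → β) : Prop :=
  ∀ ⦃x y⦄, b x = b y → x < y → SignedLT ε (f x) (f y)

theorem IsSignedMono.signedLT_apply [LT α] [LT β] {ε δ : ℤˣ} {b : α → γ} {f : α → β}
    (hf : IsSignedMono ε b f) {x y : α} (hb : b x = b y) (h : SignedLT δ x y) :
    SignedLT (δ * ε) (f x) (f y) := by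
  rcases Int.units_eq_one_or δ with rfl | rfl
  · simpa using hf hb (signedLT_one.1 h)
  · simpa [signedLT_neg] using hf hb.symm (signedLT_neg_one.1 h)

theorem IsSignedMono.signedLT_pow_apply [LT α] {ε : ℤˣ} {b : α → γ} {π : Equiv.Perm α}
    (hπ : IsSignedMono ε b π) {x y : α} (hxy : x < y) {k : ℕ}
    (hb : ∀ j < k, b ((π ^ j) x) = b ((π ^ j) y)) :
    SignedLT (ε ^ k) ((π ^ k) x) ((π ^ k) y) := by
  induction k with
  | zero => simpa using hxy
  | succ k ih =>
    rw [pow_succ, pow_succ', Equiv.Perm.mul_apply, Equiv.Perm.mul_apply]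
    exact hπ.signedLT_apply (hb k k.lt_succ_self) (ih fun j hj => hb j (hj.trans k.lt_succ_self))

end SignedMono

section FullCycles

variable {α : Type*} {c π σ : Equiv.Perm α}

theorem isCycleOn_univ_conj_iff : (σ * π * σ⁻¹).IsCycleOn Set.univ ↔ π.IsCycleOn Set.univ := by
  have key {π σ : Equiv.Perm α} (h : π.IsCycleOn Set.univ) : (σ * π * σ⁻¹).IsCycleOn Set.univ := by
    simpa [Set.image_univ_of_surjective σ.surjective] using h.conj (g := σ)
  refine ⟨fun h => ?_, key⟩
  simpa [mul_assoc] using key (σ := σ⁻¹) h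

theorem isConj_iff_isCycleOn_univ [Finite α] (hc : c.IsCycleOn Set.univ) :
    IsConj c π ↔ π.IsCycleOn Set.univ := by
  classical
  cases nonempty_fintype α
  constructor
  · intro h
    obtain ⟨σ, rfl⟩ := isConj_iff.1 h
    exact isCycleOn_univ_conj_iff.2 hc
  · intro hπ
    rcases subsingleton_or_nontrivial α with h | h
    · rw [Subsingleton.elim c π]
    · have hcycle {ρ : Equiv.Perm α} (hρ : ρ.IsCycleOn Set.univ) :
          ρ.IsCycle ∧ ρ.support = Finset.univ :=
        ⟨Equiv.Perm.isCycle_iff_exists_isCycleOn.2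
          ⟨Set.univ, Set.nontrivial_univ, hρ, fun _ _ => Set.mem_univ _⟩,
          Finset.eq_univ_of_forall fun a =>
            Equiv.Perm.mem_support.2 (hρ.apply_ne Set.nontrivial_univ (Set.mem_univ a))⟩
      exact (hcycle hc).1.isConj (hcycle hπ).1 (by rw [(hcycle hc).2, (hcycle hπ).2])

end FullCycles

section Aperiodic

variable {α γ : Type*} {ε : ℤˣ} {c π : Equiv.Perm α}

theorem IsSignedMono.pow_eq_one_of_even [LinearOrder α] [Finite α] {b : α → γ}
    (hπ : IsSignedMono ε b π) {t : ℕ} (ht : Even t) (hb : b ∘ (π ^ t) = b) : π ^ t = 1 := by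
  ext1 x
  have hword (k : ℕ) (y : α) : b ((π ^ k) ((π ^ t) y)) = b ((π ^ k) y) := by
    rw [← Equiv.Perm.mul_apply, pow_mul_comm, Equiv.Perm.mul_apply]
    exact congrFun hb _
  let f (y : {y // ∀ k, b ((π ^ k) y) = b ((π ^ k) x)}) :
      {y // ∀ k, b ((π ^ k) y) = b ((π ^ k) x)} :=
    ⟨(π ^ t) y, fun k => (hword k y).trans (y.2 k)⟩
  have hf : StrictMono f := fun y z hyz => by
    have h := hπ.signedLT_pow_apply (k := t) hyz fun j _ => (y.2 j).trans (z.2 j).symm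
    obtain ⟨m, rfl⟩ := ht
    rwa [pow_add ε, Int.units_mul_self, signedLT_one] at h
  -- A strictly increasing self-map of a finite linear order is the identity.
  exact congrArg Subtype.val (le_antisymm hf.apply_le hf.le_apply : f ⟨x, fun _ => rfl⟩ = _)

/-- A labelling is aperiodic along `c` if only trivial powers of `c` preserve it. For a full cycle
`c` this says that the cyclic word of labels read along `c` is primitive. -/
def IsAperiodic (c : Equiv.Perm α) (w : α → γ) : Prop :=
  ∀ t : ℕ, w ∘ (c ^ t) = w → c ^ t = 1

theorem IsAperiodic.of_conj {b : α → γ} {σ : Equiv.Perm α}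
    (h : IsAperiodic (σ * c * σ⁻¹) b) : IsAperiodic c (b ∘ σ) := by
  intro t ht
  have hb : b ∘ ((σ * c * σ⁻¹) ^ t) = b := by
    refine σ.surjective.injective_comp_right (funext fun s => ?_)
    simpa using congrFun ht s
  simpa [conj_pow] using h t hb

theorem natCard_dvd_iff_pow_eq_one [Finite α] [Nonempty α] (hc : c.IsCycleOn Set.univ) {t : ℕ} :
    Nat.card α ∣ t ↔ c ^ t = 1 := by
  cases nonempty_fintype α
  rw [← Finset.coe_univ] at hc
  have hfix (s : α) : (c ^ t) s = s ↔ Nat.card α ∣ t := by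
    rw [hc.pow_apply_eq (Finset.mem_univ s), Finset.card_univ, Nat.card_eq_fintype_card]
  exact ⟨fun h => Equiv.ext fun s => (hfix s).2 h,
    fun h => (hfix (Classical.arbitrary α)).1 (by rw [h, Equiv.Perm.one_apply])⟩

theorem dvd_or_even_of_dvd_two_mul {n t : ℕ} (hn : ¬ n ≡ 2 [MOD 4]) (h : n ∣ 2 * t) :
    n ∣ t ∨ Even t := by
  rcases Nat.even_or_odd n with heven | hodd
  · have h4 : 4 ∣ 2 * t := Nat.dvd_trans (by grind [Nat.ModEq]) h
    exact Or.inr (even_iff_two_dvd.2 (by omega))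
  · exact Or.inl (hodd.coprime_two_right.dvd_of_dvd_mul_left h)

theorem IsSignedMono.isAperiodic [LinearOrder α] [Finite α] (hα : ¬ Nat.card α ≡ 2 [MOD 4])
    {b : α → γ} (hcyc : π.IsCycleOn Set.univ) (hπ : IsSignedMono ε b π) : IsAperiodic π b := by
  intro t ht
  cases isEmpty_or_nonempty α
  · exact Subsingleton.elim _ _
  have htwo : π ^ (2 * t) = 1 := hπ.pow_eq_one_of_even (even_two_mul t) <| by
    rw [two_mul, pow_add, Equiv.Perm.coe_mul, ← Function.comp_assoc, ht, ht]
  rcases dvd_or_even_of_dvd_two_mul hα ((natCard_dvd_iff_pow_eq_one hcyc).2 htwo) with hdvd | heven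
  · exact (natCard_dvd_iff_pow_eq_one hcyc).1 hdvd
  · exact hπ.pow_eq_one_of_even heven ht

end Aperiodic

section Itinerary

variable {α : Type*} {ε : ℤˣ} {c π : Equiv.Perm α}

/-- The sequence of labels met when iterating `c` from `s`, its `k`-th letter multiplied by `ε ^ k`.
It takes values in `Lex (ℕ → ℤ)` so that itineraries are compared lexicographically; the
alternating signs for `ε = -1` account for the order being reversed at each step. -/
def signedItinerary (ε : ℤˣ) (c : Equiv.Perm α) (w : α → ℤ) (s : α) : Lex (ℕ → ℤ) :=
  toLex fun k => ε ^ k • w ((c ^ k) s)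

theorem signedItinerary_lt_iff {w : α → ℤ} {s t : α} :
    signedItinerary ε c w s < signedItinerary ε c w t ↔
      ∃ k, (∀ j < k, w ((c ^ j) s) = w ((c ^ j) t)) ∧
        ε ^ k • w ((c ^ k) s) < ε ^ k • w ((c ^ k) t) :=
  exists_congr fun _ => and_congr_left fun _ => forall₂_congr fun j _ =>
    smul_left_cancel_iff (ε ^ j)

theorem signedItinerary_lt_of_lt {w : α → ℤ} {s t : α} (h : w s < w t) :
    signedItinerary ε c w s < signedItinerary ε c w t :=
  signedItinerary_lt_iff.2 ⟨0, by simp, by simpa using h⟩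

theorem signedLT_signedItinerary_apply {w : α → ℤ} {s t : α} (hw : w s = w t)
    (h : signedItinerary ε c w s < signedItinerary ε c w t) :
    SignedLT ε (signedItinerary ε c w (c s)) (signedItinerary ε c w (c t)) := by
  obtain ⟨k, hk, hlt⟩ := signedItinerary_lt_iff.1 h
  cases k with
  | zero => simp [hw] at hlt
  | succ k =>
    have hk' (j : ℕ) (hj : j < k) : w ((c ^ j) (c s)) = w ((c ^ j) (c t)) := by
      simpa only [pow_succ, Equiv.Perm.mul_apply] using hk (j + 1) (by omega)
    rcases Int.units_eq_one_or ε with rfl | rfl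
    · rw [signedLT_one]
      exact signedItinerary_lt_iff.2 ⟨k, hk', by simpa [pow_succ] using hlt⟩
    · rw [signedLT_neg_one]
      exact signedItinerary_lt_iff.2
        ⟨k, fun j hj => (hk' j hj).symm, by simpa [pow_succ] using hlt⟩

theorem signedItinerary_conj (ε : ℤˣ) (c σ : Equiv.Perm α) (b : α → ℤ) :
    signedItinerary ε c (b ∘ σ) = signedItinerary ε (σ * c * σ⁻¹) b ∘ σ := by
  funext s
  simp [signedItinerary]

theorem signedItinerary_injective [Finite α] (hc : c.IsCycleOn Set.univ) {w : α → ℤ}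
    (hw : IsAperiodic c w) : Function.Injective (signedItinerary ε c w) := by
  intro s s' h
  have hword (k : ℕ) : w ((c ^ k) s) = w ((c ^ k) s') :=
    smul_left_cancel (ε ^ k) (congrFun (congrArg ofLex h) k)
  obtain ⟨t, rfl⟩ := (hc.2 (Set.mem_univ s) (Set.mem_univ s')).exists_nat_pow_eq
  have hperiod : w ∘ (c ^ t) = w := funext fun u => by
    obtain ⟨k, rfl⟩ := (hc.2 (Set.mem_univ s) (Set.mem_univ u)).exists_nat_pow_eq
    rw [hword k, Function.comp_apply, ← Equiv.Perm.mul_apply, pow_mul_comm, Equiv.Perm.mul_apply]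
  rw [hw t hperiod, Equiv.Perm.one_apply]

theorem IsSignedMono.monotone_signedItinerary [LinearOrder α] {b : α → ℤ} (hb : Monotone b)
    (hπ : IsSignedMono ε b π) : Monotone (signedItinerary ε π b) := by
  refine monotone_iff_forall_lt.2 fun x y hxy => not_lt.1 fun h => ?_
  obtain ⟨k, hk, hlt⟩ := signedItinerary_lt_iff.1 h
  exact hlt.not_ge ((hπ.signedLT_pow_apply hxy fun j hj => (hk j hj).symm).smul_le_smul hb)

end Itinerary

section Rearrangements

variable {n : ℕ} {ε : ℤˣ} {b : Fin n → ℤ} {c : Equiv.Perm (Fin n)}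

theorem IsSignedMono.eq_of_comp_eq (hb : Monotone b) (hc : c.IsCycleOn Set.univ)
    {σ τ : Equiv.Perm (Fin n)} (haper : IsAperiodic c (b ∘ σ))
    (hσ : IsSignedMono ε b (σ * c * σ⁻¹)) (hτ : IsSignedMono ε b (τ * c * τ⁻¹))
    (h : b ∘ σ = b ∘ τ) : σ = τ := by
  have hsorted {ρ : Equiv.Perm (Fin n)} (hρ : IsSignedMono ε b (ρ * c * ρ⁻¹)) :
      Monotone (signedItinerary ε c (b ∘ ρ) ∘ ⇑ρ⁻¹) := by
    simpa [signedItinerary_conj, Function.comp_assoc] using hρ.monotone_signedItinerary hb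
  have heq := Tuple.unique_monotone (hsorted hσ) (h ▸ hsorted hτ)
  exact inv_injective (Equiv.ext fun i => signedItinerary_injective hc haper (congrFun heq i))

theorem exists_perm_lt_iff_lt {γ : Type*} [LinearOrder γ] {f : Fin n → γ}
    (hf : Function.Injective f) : ∃ σ : Equiv.Perm (Fin n), ∀ s t, σ s < σ t ↔ f s < f t := by
  have hsort : StrictMono (f ∘ Tuple.sort f) :=
    (Tuple.monotone_sort f).strictMono_of_injective (hf.comp (Tuple.sort f).injective)
  exact ⟨(Tuple.sort f)⁻¹, fun s t => by simp [← hsort.lt_iff_lt]⟩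

theorem comp_eq_of_lt_imp_lt {γ : Type*} [LinearOrder γ] {b : Fin n → γ} (hb : Monotone b)
    {σ τ : Equiv.Perm (Fin n)}
    (h : ∀ s t, b (τ s) < b (τ t) → σ s < σ t) : b ∘ σ = b ∘ τ := by
  have hmono : Monotone (b ∘ (τ * σ⁻¹)) := fun i j hij =>
    not_lt.1 fun hlt => hij.not_gt (by simpa using h (σ⁻¹ j) (σ⁻¹ i) hlt)
  have heq := Tuple.unique_monotone (τ := 1) hmono hb
  funext s
  simpa using (congrFun heq (σ s)).symm

theorem exists_isSignedMono_comp_eq (hb : Monotone b) (hc : c.IsCycleOn Set.univ)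
    {τ : Equiv.Perm (Fin n)} (hτ : IsAperiodic c (b ∘ τ)) :
    ∃ σ : Equiv.Perm (Fin n), IsSignedMono ε b (σ * c * σ⁻¹) ∧ b ∘ σ = b ∘ τ := by
  obtain ⟨σ, hσ⟩ := exists_perm_lt_iff_lt (signedItinerary_injective (ε := ε) hc hτ)
  have hbσ : b ∘ σ = b ∘ τ :=
    comp_eq_of_lt_imp_lt hb fun s t h => (hσ s t).2 (signedItinerary_lt_of_lt h)
  refine ⟨σ, fun x y hxy hlt => ?_, hbσ⟩
  obtain ⟨s, rfl⟩ := σ.surjective x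
  obtain ⟨t, rfl⟩ := σ.surjective y
  have hword : (b ∘ τ) s = (b ∘ τ) t := by rw [← hbσ]; exact hxy
  simp only [Equiv.Perm.mul_apply, Equiv.Perm.inv_def, Equiv.symm_apply_apply,
    signedLT_congr (hσ _ _) (hσ _ _)]
  exact signedLT_signedItinerary_apply hword ((hσ s t).1 hlt)

theorem natCard_isSignedMono_conj (hn : ¬ n ≡ 2 [MOD 4]) (ε : ℤˣ) (hb : Monotone b)
    (hc : c.IsCycleOn Set.univ) :
    Nat.card {σ : Equiv.Perm (Fin n) // IsSignedMono ε b (σ * c * σ⁻¹)} =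
      Nat.card {w : Fin n → ℤ // IsAperiodic c w ∧ ∃ τ : Equiv.Perm (Fin n), b ∘ τ = w} := by
  have haper {σ : Equiv.Perm (Fin n)} (hσ : IsSignedMono ε b (σ * c * σ⁻¹)) :
      IsAperiodic c (b ∘ σ) :=
    (hσ.isAperiodic (by simpa using hn) (isCycleOn_univ_conj_iff.2 hc)).of_conj
  refine Nat.card_eq_of_bijective (fun σ => ⟨b ∘ σ.1, haper σ.2, σ.1, rfl⟩) ⟨fun σ τ h => ?_, ?_⟩
  · exact Subtype.ext (σ.2.eq_of_comp_eq hb hc (haper σ.2) τ.2 (congrArg Subtype.val h))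
  · rintro ⟨_, hw, τ, rfl⟩
    obtain ⟨σ, hσ, h⟩ := exists_isSignedMono_comp_eq hb hc hw
    exact ⟨⟨σ, hσ⟩, Subtype.ext h⟩

end Rearrangements

section Blocks

variable {α : Type*} [LinearOrder α]

/-- The labelling of the positions by the consecutive blocks that result from cutting after each
element of `S`. -/
def blockIndex (S : Finset α) (i : α) : ℤ :=
  Finset.card {s ∈ S | s < i}

theorem blockIndex_monotone (S : Finset α) : Monotone (blockIndex S) := fun _ _ hij =>
  Nat.cast_le.2 <| Finset.card_le_card <|
    Finset.monotone_filter_right S fun _ _ h => lt_of_lt_of_le h hij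

theorem blockIndex_lt_of_mem {S : Finset α} {i j : α} (hi : i ∈ S) (hij : i < j) :
    blockIndex S i < blockIndex S j := by
  refine Nat.cast_lt.2 (Finset.card_lt_card ⟨?_, fun hsub => ?_⟩)
  · exact Finset.monotone_filter_right S fun _ _ h => h.trans hij
  · simpa using hsub (Finset.mem_filter.2 ⟨hi, hij⟩)

theorem blockIndex_succ_of_notMem [SuccOrder α] {S : Finset α} {i : α} (hi : i ∉ S) :
    blockIndex S (Order.succ i) = blockIndex S i := by
  by_cases hmax : IsMax i
  · rw [hmax.succ_eq]
  · unfold blockIndex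
    congr 2
    refine Finset.filter_congr fun s hs => ?_
    rw [Order.lt_succ_iff_of_not_isMax hmax, (ne_of_mem_of_not_mem hs hi).le_iff_lt]

end Blocks

section DescentSets

variable {α β : Type*} [LinearOrder α] [Fintype α] [LinearOrder β]

/-- The positions of descents of the word `f`. The last position is never a descent since it is its
own successor `Order.succ`. -/
def descents [SuccOrder α] (f : α → β) : Finset α :=
  {i | f (Order.succ i) < f i}

/-- The positions in `S` whose predecessor exists and is not in `S`. When `S` is the descent set of
an injective word, these are the peaks. The first position is excluded since it is its own
predecessor `Order.pred`. -/
def runStarts [PredOrder α] (S : Finset α) : Finset α :=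
  {i ∈ S | Order.pred i ∉ S}

theorem runStarts_descents [SuccOrder α] [PredOrder α] {f : α → β}
    (hf : Function.Injective f) : runStarts (descents f) =
      ({i | f (Order.pred i) < f i ∧ f (Order.succ i) < f i} : Finset α) := by
  ext i
  by_cases hi : IsMin i
  · simp [runStarts, descents, hi.pred_eq]
  · have hne : f i ≠ f (Order.pred i) := hf.ne (Order.pred_lt_of_not_isMin hi).ne'
    simp [runStarts, descents, Order.succ_pred_of_not_isMin hi, hne.symm.le_iff_lt, and_comm]

theorem isSignedMono_one_blockIndex_iff [SuccOrder α] {S : Finset α} {f : α → β}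
    (hf : Function.Injective f) : IsSignedMono 1 (blockIndex S) f ↔ descents f ⊆ S := by
  constructor
  · intro h i hi
    by_contra hS
    have hdesc : f (Order.succ i) < f i := by simpa [descents] using hi
    have hlt : i < Order.succ i :=
      (Order.le_succ i).lt_of_ne fun heq => hdesc.ne (congrArg f heq.symm)
    exact hdesc.not_gt (signedLT_one.1 (h (blockIndex_succ_of_notMem hS).symm hlt))
  · intro h x y hxy hlt
    have hblock : StrictMonoOn f (blockIndex S ⁻¹' {blockIndex S x}) := by
      refine strictMonoOn_of_lt_succ
        (Set.ordConnected_singleton.preimage_mono (blockIndex_monotone S)) fun i hi hix hsx => ?_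
      have hlt := Order.lt_succ_of_not_isMax hi
      have hS : i ∉ S := fun hS => (blockIndex_lt_of_mem hS hlt).ne (hix.trans hsx.symm)
      have hdesc : ¬ f (Order.succ i) < f i := by simpa [descents] using mt (@h i) hS
      exact (not_lt.1 hdesc).lt_of_ne (hf.ne hlt.ne)
    exact signedLT_one.2 (hblock rfl hxy.symm hlt)

end DescentSets

section Equidistribution

variable {α β γ : Type*} [Finite α]

theorem natCard_subtype_comp_eq_sum [Fintype β] (f : α → β) (Q : β → Prop)
    [DecidablePred Q] :
    Nat.card {a // Q (f a)} = ∑ y : Subtype Q, Nat.card {a // f a = y} := by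
  rw [← Nat.card_sigma]
  exact Nat.card_congr (Equiv.sigmaSubtypeFiberEquivSubtype f fun _ => Iff.rfl).symm

theorem natCard_le_eq_natCard_lt_add_natCard_eq [PartialOrder β] (f : α → β) (y : β) :
    Nat.card {a // f a ≤ y} = Nat.card {a // f a < y} + Nat.card {a // f a = y} := by
  classical
  simp only [le_iff_lt_or_eq]
  rw [← Nat.card_sum]
  refine Nat.card_congr (subtypeOrEquiv _ _ ?_)
  exact Pi.disjoint_iff.2 fun a => Prop.disjoint_iff.2 (not_and.2 fun h => h.ne)

theorem natCard_eq_of_natCard_le [Finite β] [Finite γ] [PartialOrder β] {f : α → β}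
    {g : γ → β} (h : ∀ y, Nat.card {a // f a ≤ y} = Nat.card {a // g a ≤ y}) (y : β) :
    Nat.card {a // f a = y} = Nat.card {a // g a = y} := by
  classical
  cases nonempty_fintype β
  induction y using WellFoundedLT.induction with
  | ind y ih =>
    have hlt : Nat.card {a // f a < y} = Nat.card {a // g a < y} := by
      rw [natCard_subtype_comp_eq_sum f (· < y), natCard_subtype_comp_eq_sum g (· < y)]
      exact Finset.sum_congr rfl fun z _ => ih z z.2
    have hle := h y
    rw [natCard_le_eq_natCard_lt_add_natCard_eq, natCard_le_eq_natCard_lt_add_natCard_eq,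
      hlt] at hle
    exact Nat.add_left_cancel hle

theorem natCard_comp_eq_of_natCard_le [Finite β] [Finite γ] [PartialOrder β] {f : α → β}
    {g : γ → β} (h : ∀ y, Nat.card {a // f a ≤ y} = Nat.card {a // g a ≤ y}) (Q : β → Prop) :
    Nat.card {a // Q (f a)} = Nat.card {a // Q (g a)} := by
  classical
  cases nonempty_fintype β
  rw [natCard_subtype_comp_eq_sum f Q, natCard_subtype_comp_eq_sum g Q]
  exact Finset.sum_congr rfl fun y _ => natCard_eq_of_natCard_le h y

theorem natCard_subtype_conj {G : Type*} [Group G] (c : G) (P : G → Prop) :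
    Nat.card {g // P (g * c * g⁻¹)} =
      Nat.card {x // IsConj c x ∧ P x} * Nat.card (Subgroup.centralizer {c}) := by
  rw [← Nat.card_prod]
  refine Nat.card_congr <| (Equiv.sigmaSubtypeFiberEquivSubtype (fun g => g * c * g⁻¹) fun g =>
    ⟨fun h => ⟨isConj_iff.2 ⟨g, rfl⟩, h⟩, And.right⟩).symm.trans <|
    (Equiv.sigmaCongrRight fun x => Classical.choice ?_).trans (Equiv.sigmaEquivProd _ _)
  obtain ⟨t, ht⟩ := isConj_iff.1 x.2.1
  refine ⟨(Equiv.mulLeft t⁻¹).subtypeEquiv fun g => ?_⟩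
  rw [Subgroup.mem_centralizer_singleton_iff, ← ht, Equiv.coe_mulLeft, mul_inv_eq_iff_eq_mul,
    mul_assoc t⁻¹, inv_mul_eq_iff_eq_mul]
  simp only [mul_assoc]

end Equidistribution

section Reversal

variable {n : ℕ}

theorem isSignedMono_neg_one_iff {γ : Type*} {b : Fin n → γ} {π : Equiv.Perm (Fin n)} :
    IsSignedMono (-1) b π ↔ IsSignedMono 1 b (Fin.revPerm * π : Equiv.Perm (Fin n)) := by
  simp [IsSignedMono]

theorem natCard_isCycleOn_descents_eq_revPerm_mul (hn : ¬ n ≡ 2 [MOD 4])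
    (Q : Finset (Fin n) → Prop) :
    Nat.card {π : Equiv.Perm (Fin n) // π.IsCycleOn Set.univ ∧ Q (descents π)} =
      Nat.card {π : Equiv.Perm (Fin n) //
        π.IsCycleOn Set.univ ∧ Q (descents (Fin.revPerm * π : Equiv.Perm (Fin n)))} := by
  obtain ⟨c, hc, -⟩ := (Finset.univ : Finset (Fin n)).exists_cycleOn
  rw [Finset.coe_univ] at hc
  have hsub (S : Finset (Fin n)) :
      Nat.card {σ : Equiv.Perm (Fin n) // descents (σ * c * σ⁻¹) ⊆ S} =
        Nat.card {σ : Equiv.Perm (Fin n) //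
          descents (Fin.revPerm * (σ * c * σ⁻¹) : Equiv.Perm (Fin n)) ⊆ S} := by
    simp only [← isSignedMono_one_blockIndex_iff (Equiv.injective _), ← isSignedMono_neg_one_iff]
    rw [natCard_isSignedMono_conj hn 1 (blockIndex_monotone S) hc,
      natCard_isSignedMono_conj hn (-1) (blockIndex_monotone S) hc]
  have hconj := natCard_comp_eq_of_natCard_le hsub Q
  rw [natCard_subtype_conj c fun π => Q (descents π),
    natCard_subtype_conj c fun π => Q (descents (Fin.revPerm * π : Equiv.Perm (Fin n)))] at hconj
  simp only [isConj_iff_isCycleOn_univ hc] at hconj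
  exact Nat.eq_of_mul_eq_mul_right Nat.card_pos hconj

theorem exists_apply_succ_lt_iff {β : Type*} [Preorder β] {f : Fin n → β} {i : Fin n} :
    (∃ h : i.val + 1 < n, f ⟨i.val + 1, h⟩ < f i) ↔ f (Order.succ i) < f i := by
  by_cases h : i.val + 1 < n
  · have hcov : i ⋖ ⟨i.val + 1, h⟩ := by simp
    simp [h, hcov.succ_eq]
  · have hmax : IsMax i := fun j _ => Fin.le_def.2 (by omega)
    simp [h, hmax.succ_eq]

theorem exists_apply_pred_lt_iff {β : Type*} [Preorder β] {f : Fin n → β} {i : Fin n} :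
    (∃ _ : 1 ≤ i.val, f ⟨i.val - 1, by omega⟩ < f i) ↔ f (Order.pred i) < f i := by
  by_cases h : 1 ≤ i.val
  · have hcov : ⟨i.val - 1, by omega⟩ ⋖ i := by simpa using Nat.sub_add_cancel h
    simp [h, hcov.pred_eq]
  · have hmin : IsMin i := fun j _ => Fin.le_def.2 (by omega)
    simp [h, hmin.pred_eq]

theorem des_eq_card_descents (π : Equiv.Perm (Fin n)) : des n π = (descents π).card := by
  simp only [des, exists_apply_succ_lt_iff (f := π), descents]

theorem pk_eq_card_peaks (π : Equiv.Perm (Fin n)) : pk n π =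
    Finset.card {i | π (Order.pred i) < π i ∧ π (Order.succ i) < π i} := by
  unfold pk
  congr 1
  refine Finset.filter_congr fun i _ => ?_
  rw [← exists_apply_pred_lt_iff, ← exists_apply_succ_lt_iff]
  exact ⟨fun ⟨h₁, h₂, hp, hs⟩ => ⟨⟨h₁, hp⟩, h₂, hs⟩, fun ⟨⟨h₁, hp⟩, h₂, hs⟩ => ⟨h₁, h₂, hp, hs⟩⟩

theorem pk_eq_card_runStarts_descents (π : Equiv.Perm (Fin n)) :
    pk n π = (runStarts (descents π)).card := by
  rw [pk_eq_card_peaks, runStarts_descents π.injective]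

theorem rev_succ_eq_pred_rev (i : Fin n) : (Order.succ i).rev = Order.pred i.rev := by
  cases n with
  | zero => exact i.elim0
  | succ n => cases i using Fin.lastCases <;> simp [Fin.rev_castSucc, Fin.rev_succ]

theorem rev_pred_eq_succ_rev (i : Fin n) : (Order.pred i).rev = Order.succ i.rev := by
  rw [← Fin.rev_rev (Order.succ i.rev), rev_succ_eq_pred_rev, Fin.rev_rev]

theorem pk_mul_revPerm (π : Equiv.Perm (Fin n)) : pk n (π * Fin.revPerm) = pk n π := by
  rw [pk_eq_card_peaks, pk_eq_card_peaks]
  refine Finset.card_equiv Fin.revPerm fun i => ?_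
  simp [rev_succ_eq_pred_rev, rev_pred_eq_succ_rev, and_comm]

theorem des_succ (π : Equiv.Perm (Fin (n + 1))) :
    des (n + 1) π = Finset.card {i : Fin n | π i.succ < π i.castSucc} := by
  rw [des_eq_card_descents, descents, Finset.card_filter, Finset.card_filter, Fin.sum_univ_castSucc]
  simp [-Finset.sum_boole]

theorem des_mul_revPerm_add_des (π : Equiv.Perm (Fin (n + 1))) :
    des (n + 1) (π * Fin.revPerm) + des (n + 1) π = n := by
  have hrev : des (n + 1) (π * Fin.revPerm) =
      Finset.card {i : Fin n | ¬ π i.succ < π i.castSucc} := by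
    rw [des_succ]
    refine Finset.card_equiv Fin.revPerm fun i => ?_
    have hne : π i.rev.castSucc ≠ π i.rev.succ := π.injective.ne Fin.castSucc_lt_succ.ne
    simp [Fin.rev_succ, Fin.rev_castSucc, hne.le_iff_lt]
  rw [hrev, des_succ, add_comm, Finset.card_filter_add_card_filter_not]
  simp

end Reversal

theorem stmt1 (n : ℕ) (hn : 1 ≤ n) (hmod : ¬ n ≡ 2 [MOD 4]) (j k : ℕ) :
    Nat.card {π : Equiv.Perm (Fin n) //
        IsCyclicPerm n π ∧ pk n π = j ∧ des n π = k}
      = Nat.card {π : Equiv.Perm (Fin n) //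
        IsCyclicPerm n π ∧ pk n π = j ∧ (des n π : ℤ) = (n : ℤ) - 1 - (k : ℤ)} := by
  obtain ⟨m, rfl⟩ := Nat.exists_eq_add_of_le' hn
  have hasc := natCard_isCycleOn_descents_eq_revPerm_mul hmod fun S =>
    (runStarts S).card = j ∧ S.card = k
  simp only [← pk_eq_card_runStarts_descents, ← des_eq_card_descents] at hasc
  refine hasc.trans <| .symm <| Nat.card_congr <|
    (MulAut.conj Fin.revPerm).toEquiv.subtypeEquiv fun π => ?_
  have hrev : Fin.revPerm * MulAut.conj Fin.revPerm π = π * Fin.revPerm := by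
    ext i
    simp
  have hdes := des_mul_revPerm_add_des π
  rw [MulEquiv.toEquiv_eq_coe, MulEquiv.coe_toEquiv, hrev, pk_mul_revPerm, MulAut.conj_apply,
    isCycleOn_univ_conj_iff]
  exact and_congr Iff.rfl (and_congr_right fun _ => by omega)
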